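/- Let a > 0 and let θ : ℝ² × ℝ → ℝ be infinitely differentiable with compact support. Set ψ(y,t) = ∂²θ/∂t²(y,t) − a² Δθ(y,t), where Δ is the Laplacian in the spatial variable y ∈ ℝ². Then for every x ∈ ℝ² and every τ ∈ ℝ, (1/(2πa)) ∫_τ^∞ ∬_{\{y : |y−x| < a(t−τ)\}} ψ(y,t) / √( a²(t−τ)² − |x−y|² ) dy dt = θ(x,τ). (Poisson's formula identity for the planar wave equation applied to test functions; this is the key identity showing that the Poisson-formula candidate is a generalized solution.) -/

import Mathlib

open MeasureTheory Real

/-- The spatial Laplacian of a function `f : ℝ² → ℝ` at `y`, as the sum of the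
second directional derivatives along the standard basis vectors. -/
noncomputable def spatialLaplacian (f : EuclideanSpace ℝ (Fin 2) → ℝ)
    (y : EuclideanSpace ℝ (Fin 2)) : ℝ :=
  ∑ i : Fin 2, iteratedDeriv 2 (fun u : ℝ => f (y + u • EuclideanSpace.single i (1 : ℝ))) 0

/-! On the light cone with apex `(x, τ)` use the coordinates `t = τ + s` and
`y = x + (a s sin φ) (cos α, sin α)` with `0 < φ < π / 2`. The substitution `|y - x| = a s sin φ`
removes the singularity of the kernel: `dy / √(a² (t - τ)² - |x - y|²)` becomes
`a s sin φ dφ dα`. In the coordinates `(s, φ, α)` the function `s sin φ (∂ₜ² - a² Δ) θ` is a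
divergence, so its integral reduces to boundary terms. The flux in `φ` vanishes on the axis `φ = 0`
and on the lateral boundary `φ = π / 2`, the flux in `α` is periodic, and the flux in `s` vanishes
for large `s` while at the apex it equals `-sin φ θ(x, τ)`, which integrates to `-2π θ(x, τ)`. -/

open scoped Laplacian

section IteratedIntegrals

variable {F : Type*} [NormedAddCommGroup F] [NormedSpace ℝ F]

theorem intervalIntegral_swap_of_continuous {f : ℝ → ℝ → F} (hf : Continuous ↿f) (a b c d : ℝ) :
    ∫ x in a..b, ∫ y in c..d, f x y = ∫ y in c..d, ∫ x in a..b, f x y :=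
  intervalIntegral_intervalIntegral_swap <|
    (hf.continuousOn.integrableOn_compact (isCompact_uIcc.prod isCompact_uIcc)).mono_set
      (Set.prod_mono Set.uIoc_subset_uIcc Set.uIoc_subset_uIcc)

theorem intervalIntegral3_add {f g : ℝ → ℝ → ℝ → F} (hf : Continuous ↿f) (hg : Continuous ↿g)
    (a₁ b₁ a₂ b₂ a₃ b₃ : ℝ) :
    ∫ x in a₁..b₁, ∫ y in a₂..b₂, ∫ z in a₃..b₃, (f x y z + g x y z) =
      (∫ x in a₁..b₁, ∫ y in a₂..b₂, ∫ z in a₃..b₃, f x y z) +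
        ∫ x in a₁..b₁, ∫ y in a₂..b₂, ∫ z in a₃..b₃, g x y z := by
  have add_z (x y : ℝ) : ∫ z in a₃..b₃, (f x y z + g x y z) =
      (∫ z in a₃..b₃, f x y z) + ∫ z in a₃..b₃, g x y z :=
    intervalIntegral.integral_add (Continuous.intervalIntegrable (by fun_prop) _ _)
      (Continuous.intervalIntegrable (by fun_prop) _ _)
  have add_yz (x : ℝ) : ∫ y in a₂..b₂, ∫ z in a₃..b₃, (f x y z + g x y z) =
      (∫ y in a₂..b₂, ∫ z in a₃..b₃, f x y z) + ∫ y in a₂..b₂, ∫ z in a₃..b₃, g x y z := by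
    simp only [add_z]
    exact intervalIntegral.integral_add (Continuous.intervalIntegrable (by fun_prop) _ _)
      (Continuous.intervalIntegrable (by fun_prop) _ _)
  simp only [add_yz]
  exact intervalIntegral.integral_add (Continuous.intervalIntegrable (by fun_prop) _ _)
    (Continuous.intervalIntegrable (by fun_prop) _ _)

theorem intervalIntegral3_divergence [CompleteSpace F] {f g h f' g' h' : ℝ → ℝ → ℝ → F}
    (hf : ∀ x y z, HasDerivAt (fun x => f x y z) (f' x y z) x)
    (hg : ∀ x y z, HasDerivAt (fun y => g x y z) (g' x y z) y)
    (hh : ∀ x y z, HasDerivAt (fun z => h x y z) (h' x y z) z)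
    (hf' : Continuous ↿f') (hg' : Continuous ↿g') (hh' : Continuous ↿h')
    (a₁ b₁ a₂ b₂ a₃ b₃ : ℝ) :
    ∫ x in a₁..b₁, ∫ y in a₂..b₂, ∫ z in a₃..b₃, (f' x y z + g' x y z + h' x y z) =
      (∫ y in a₂..b₂, ∫ z in a₃..b₃, (f b₁ y z - f a₁ y z)) +
        (∫ x in a₁..b₁, ∫ z in a₃..b₃, (g x b₂ z - g x a₂ z)) +
        ∫ x in a₁..b₁, ∫ y in a₂..b₂, (h x y b₃ - h x y a₃) := by
  have int_f (y z : ℝ) : ∫ x in a₁..b₁, f' x y z = f b₁ y z - f a₁ y z :=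
    intervalIntegral.integral_eq_sub_of_hasDerivAt (fun x _ => hf x y z)
      (Continuous.intervalIntegrable (by fun_prop) _ _)
  have int_g (x z : ℝ) : ∫ y in a₂..b₂, g' x y z = g x b₂ z - g x a₂ z :=
    intervalIntegral.integral_eq_sub_of_hasDerivAt (fun y _ => hg x y z)
      (Continuous.intervalIntegrable (by fun_prop) _ _)
  have int_h (x y : ℝ) : ∫ z in a₃..b₃, h' x y z = h x y b₃ - h x y a₃ :=
    intervalIntegral.integral_eq_sub_of_hasDerivAt (fun z _ => hh x y z)
      (Continuous.intervalIntegrable (by fun_prop) _ _)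
  rw [intervalIntegral3_add (by fun_prop) hh', intervalIntegral3_add hf' hg',
    intervalIntegral_swap_of_continuous (by fun_prop)]
  congr! 2
  · refine intervalIntegral.integral_congr fun y _ => ?_
    simp only [intervalIntegral_swap_of_continuous (f := fun x z => f' x y z) (by fun_prop), int_f]
  · refine intervalIntegral.integral_congr fun x _ => ?_
    simp only [intervalIntegral_swap_of_continuous (f := g' x) (by fun_prop), int_g]
  · simp only [int_h]

theorem setIntegral_Ioi_eq_intervalIntegral {f : ℝ → F} {τ S : ℝ} (hS : 0 ≤ S)
    (hf : ∀ t, τ + S < t → f t = 0) :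
    ∫ t in Set.Ioi τ, f t = ∫ s in 0..S, f (τ + s) := by
  rw [intervalIntegral.integral_comp_add_left, add_zero,
    intervalIntegral.integral_of_le (by linarith)]
  refine setIntegral_eq_of_subset_of_forall_sdiff_eq_zero measurableSet_Ioi
    Set.Ioc_subset_Ioi_self fun t ht => hf t ?_
  simpa [ht.1.out] using ht.2

end IteratedIntegrals

section SecondDerivatives

variable {Q F : Type*} [NormedAddCommGroup Q] [NormedSpace ℝ Q] [NormedAddCommGroup F]
  [NormedSpace ℝ F] {f : Q → F} {γ v : ℝ → Q} {γ' v' : Q} {t : ℝ}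

theorem hasDerivAt_comp_curve (hf : ContDiff ℝ 2 f) (hγ : HasDerivAt γ γ' t) :
    HasDerivAt (fun t => f (γ t)) (fderiv ℝ f (γ t) γ') t :=
  (hf.differentiable two_ne_zero (γ t)).hasFDerivAt.comp_hasDerivAt t hγ

theorem hasDerivAt_fderiv_apply_curve (hf : ContDiff ℝ 2 f) (hγ : HasDerivAt γ γ' t)
    (hv : HasDerivAt v v' t) :
    HasDerivAt (fun t => fderiv ℝ f (γ t) (v t))
      (fderiv ℝ (fderiv ℝ f) (γ t) γ' (v t) + fderiv ℝ f (γ t) v') t :=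
  have hf' : Differentiable ℝ (fderiv ℝ f) :=
    (hf.fderiv_right (m := 1) (by norm_num)).differentiable one_ne_zero
  ((hf' (γ t)).hasFDerivAt.comp_hasDerivAt t hγ).clm_apply hv

theorem fderiv_fderiv_comm (hf : ContDiff ℝ 2 f) (q v w : Q) :
    fderiv ℝ (fderiv ℝ f) q v w = fderiv ℝ (fderiv ℝ f) q w v :=
  hf.contDiffAt.isSymmSndFDerivAt (by simp) v w

theorem iteratedDeriv_two_line (hf : ContDiff ℝ 2 f) (q v : Q) (u : ℝ) :
    iteratedDeriv 2 (fun u : ℝ => f (q + u • v)) u = fderiv ℝ (fderiv ℝ f) (q + u • v) v v := by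
  have hline (u : ℝ) : HasDerivAt (fun u : ℝ => q + u • v) v u := by
    simpa using ((hasDerivAt_id u).smul_const v).const_add q
  have hderiv : deriv (fun u : ℝ => f (q + u • v)) = fun u => fderiv ℝ f (q + u • v) v :=
    funext fun u => (hasDerivAt_comp_curve hf (hline u)).deriv
  rw [iteratedDeriv_succ, iteratedDeriv_one, hderiv]
  simpa using (hasDerivAt_fderiv_apply_curve hf (hline u) (hasDerivAt_const u v)).deriv

end SecondDerivatives

section Cone

variable {Q F : Type*} [NormedAddCommGroup Q] [NormedSpace ℝ Q] [NormedAddCommGroup F]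
  [NormedSpace ℝ F]

/-- The vector `cos α • V + sin α • W`, which has polar angle `α` with respect to the frame
`(V, W)`. Its derivative in `α` is `polarVector W (-V) α`. -/
noncomputable def polarVector (V W : Q) (α : ℝ) : Q :=
  cos α • V + sin α • W

/-- Coordinates on the solid cone with apex `p` and axis `U`: the slice at height `s` is the
ellipse with semi-axes `s • V` and `s • W`, on which `sin φ ∈ [0, 1]` is the relative distance to
the axis and `α` the polar angle. -/
noncomputable def conePoint (p U V W : Q) (s φ α : ℝ) : Q :=
  p + s • (U + sin φ • polarVector V W α)

/-- The height component of a vector field in cone coordinates whose divergence is the wave operator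
`∂_U² - ∂_V² - ∂_W²` of `f` times the weight `s * sin φ`. -/
noncomputable def heightFlux (p U V W : Q) (f : Q → F) (s φ α : ℝ) : F :=
  sin φ • (s • fderiv ℝ f (conePoint p U V W s φ α) (U - sin φ • polarVector V W α)
    - f (conePoint p U V W s φ α))

/-- The component in the coordinate `φ` of the vector field described at `heightFlux`. -/
noncomputable def radialFlux (p U V W : Q) (f : Q → F) (s φ α : ℝ) : F :=
  -(sin φ * cos φ) • fderiv ℝ f (conePoint p U V W s φ α) (polarVector V W α)

/-- The component in the coordinate `α` of the vector field described at `heightFlux`. -/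
noncomputable def angularFlux (p U V W : Q) (f : Q → F) (s φ α : ℝ) : F :=
  -fderiv ℝ f (conePoint p U V W s φ α) (polarVector W (-V) α)

/-- The wave operator `∂_U² - ∂_V² - ∂_W²` applied to `f`, at the point `q`. -/
noncomputable def waveOperator (U V W : Q) (f : Q → F) (q : Q) : F :=
  fderiv ℝ (fderiv ℝ f) q U U - fderiv ℝ (fderiv ℝ f) q V V - fderiv ℝ (fderiv ℝ f) q W W

theorem waveOperator_eq_zero_of_eventuallyEq {U V W : Q} {f : Q → F} {q : Q}
    (hf : f =ᶠ[nhds q] 0) : waveOperator U V W f q = 0 := by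
  simp [waveOperator, hf.fderiv.fderiv_eq]

theorem continuous_waveOperator (U V W : Q) {f : Q → F} (hf : ContDiff ℝ 2 f) :
    Continuous (waveOperator U V W f) := by
  have : Continuous (fderiv ℝ (fderiv ℝ f)) :=
    (hf.fderiv_right (m := 1) (by norm_num)).continuous_fderiv one_ne_zero
  unfold waveOperator
  fun_prop

section Derivatives

variable (p U V W : Q)

theorem hasDerivAt_polarVector (α : ℝ) :
    HasDerivAt (polarVector V W) (polarVector W (-V) α) α :=
  (((hasDerivAt_cos α).smul_const V).add ((hasDerivAt_sin α).smul_const W)).congr_deriv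
    (by unfold polarVector; module)

theorem hasDerivAt_conePoint_height (s φ α : ℝ) :
    HasDerivAt (fun s => conePoint p U V W s φ α) (U + sin φ • polarVector V W α) s :=
  (((hasDerivAt_id' s).smul_const (U + sin φ • polarVector V W α)).const_add p).congr_deriv
    (one_smul ℝ _)

theorem hasDerivAt_conePoint_radial (s φ α : ℝ) :
    HasDerivAt (fun φ => conePoint p U V W s φ α) ((s * cos φ) • polarVector V W α) φ :=
  (((((hasDerivAt_sin φ).smul_const (polarVector V W α)).const_add U).const_smul s).const_add
    p).congr_deriv (by module)

theorem hasDerivAt_conePoint_angular (s φ α : ℝ) :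
    HasDerivAt (fun α => conePoint p U V W s φ α) ((s * sin φ) • polarVector W (-V) α) α :=
  (((((hasDerivAt_polarVector V W α).const_smul (sin φ)).const_add U).const_smul s).const_add
    p).congr_deriv (by module)

theorem bilinear_polarVector_trace (B : Q →L[ℝ] Q →L[ℝ] F) (α : ℝ) :
    B (polarVector V W α) (polarVector V W α) +
      B (polarVector W (-V) α) (polarVector W (-V) α) = B V V + B W W := by
  simp only [polarVector, map_add, map_smul, map_neg, _root_.add_apply, _root_.smul_apply,
    _root_.neg_apply]
  linear_combination (norm := module) (sin_sq_add_cos_sq α) • (B V V + B W W)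

variable {f : Q → F} (hf : ContDiff ℝ 2 f)
include hf

theorem hasDerivAt_heightFlux (s φ α : ℝ) :
    HasDerivAt (fun s => heightFlux p U V W f s φ α)
      ((s * sin φ) • (fderiv ℝ (fderiv ℝ f) (conePoint p U V W s φ α) U U
          - sin φ ^ 2 • fderiv ℝ (fderiv ℝ f) (conePoint p U V W s φ α)
            (polarVector V W α) (polarVector V W α))
        - (2 * sin φ ^ 2) • fderiv ℝ f (conePoint p U V W s φ α) (polarVector V W α)) s := by
  have hγ := hasDerivAt_conePoint_height p U V W s φ α
  refine ((((hasDerivAt_id' s).smul (hasDerivAt_fderiv_apply_curve hf hγ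
    (hasDerivAt_const s (U - sin φ • polarVector V W α)))).sub
      (hasDerivAt_comp_curve hf hγ)).const_smul (sin φ)).congr_deriv ?_
  simp only [map_add, map_sub, map_smul, map_zero, _root_.add_apply, _root_.smul_apply,
    fderiv_fderiv_comm hf _ (polarVector V W α) U]
  module

theorem hasDerivAt_radialFlux (s φ α : ℝ) :
    HasDerivAt (fun φ => radialFlux p U V W f s φ α)
      ((sin φ ^ 2 - cos φ ^ 2) • fderiv ℝ f (conePoint p U V W s φ α) (polarVector V W α)
        - (s * sin φ * cos φ ^ 2) • fderiv ℝ (fderiv ℝ f) (conePoint p U V W s φ α)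
          (polarVector V W α) (polarVector V W α)) φ := by
  refine ((((hasDerivAt_sin φ).mul (hasDerivAt_cos φ)).neg).smul
    (hasDerivAt_fderiv_apply_curve hf (hasDerivAt_conePoint_radial p U V W s φ α)
      (hasDerivAt_const φ (polarVector V W α)))).congr_deriv ?_
  simp only [map_smul, map_zero, _root_.smul_apply, Pi.mul_apply, Pi.neg_apply]
  module

theorem hasDerivAt_angularFlux (s φ α : ℝ) :
    HasDerivAt (fun α => angularFlux p U V W f s φ α)
      (fderiv ℝ f (conePoint p U V W s φ α) (polarVector V W α)
        - (s * sin φ) • fderiv ℝ (fderiv ℝ f) (conePoint p U V W s φ α)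
          (polarVector W (-V) α) (polarVector W (-V) α)) α := by
  have hv : HasDerivAt (polarVector W (-V)) (-polarVector V W α) α :=
    (hasDerivAt_polarVector W (-V) α).congr_deriv (by unfold polarVector; module)
  refine (hasDerivAt_fderiv_apply_curve hf
    (hasDerivAt_conePoint_angular p U V W s φ α) hv).neg.congr_deriv ?_
  simp only [map_smul, map_neg, _root_.smul_apply]
  module

theorem integral_waveOperator_conePoint [CompleteSpace F] {S : ℝ}
    (hS : ∀ φ α, f (conePoint p U V W S φ α) = 0)
    (hS' : ∀ φ α, fderiv ℝ f (conePoint p U V W S φ α) = 0) :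
    ∫ s in 0..S, ∫ φ in 0..π / 2, ∫ α in -π..π,
      (s * sin φ) • waveOperator U V W f (conePoint p U V W s φ α) = (2 * π) • f p := by
  have hf' : ContDiff ℝ 1 (fderiv ℝ f) := hf.fderiv_right (by norm_num)
  have : Continuous (fderiv ℝ f) := hf'.continuous
  have : Continuous (fderiv ℝ (fderiv ℝ f)) := hf'.continuous_fderiv one_ne_zero
  have hdiv := intervalIntegral3_divergence (hasDerivAt_heightFlux p U V W hf)
    (hasDerivAt_radialFlux p U V W hf) (hasDerivAt_angularFlux p U V W hf)
    (by unfold conePoint polarVector; fun_prop) (by unfold conePoint polarVector; fun_prop)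
    (by unfold conePoint polarVector; fun_prop) 0 S 0 (π / 2) (-π) π
  have hheight (φ α : ℝ) :
      heightFlux p U V W f S φ α - heightFlux p U V W f 0 φ α = sin φ • f p := by
    have hapex : conePoint p U V W 0 φ α = p := by simp [conePoint]
    simp [heightFlux, hS, hS', hapex]
  have hradial (s α : ℝ) :
      radialFlux p U V W f s (π / 2) α - radialFlux p U V W f s 0 α = 0 := by
    simp [radialFlux]
  have hangular (s φ : ℝ) : angularFlux p U V W f s φ π - angularFlux p U V W f s φ (-π) = 0 := by
    simp [angularFlux, conePoint, polarVector]
  convert hdiv using 1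
  · congr! 6 with s φ α
    rw [waveOperator, sub_sub, ← bilinear_polarVector_trace V W _ α]
    linear_combination (norm := module) sin_sq_add_cos_sq φ •
      ((s * sin φ) • fderiv ℝ (fderiv ℝ f) (conePoint p U V W s φ α) (polarVector V W α)
        (polarVector V W α) + fderiv ℝ f (conePoint p U V W s φ α) (polarVector V W α))
  · simp [hheight, hradial, hangular, two_mul]

end Derivatives
end Cone

section Disc

variable {F : Type*} [NormedAddCommGroup F] [NormedSpace ℝ F]

theorem setIntegral_image_prod {G : Type*} [NormedAddCommGroup G] [NormedSpace ℝ G]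
    [FiniteDimensional ℝ G] [MeasurableSpace G] [BorelSpace G] (μ : Measure G)
    [μ.IsAddHaarMeasure] {f f' : ℝ → ℝ} {s : Set ℝ} {t : Set G} (hs : MeasurableSet s)
    (ht : MeasurableSet t) (hf : ∀ r ∈ s, HasDerivAt f (f' r) r) (hinj : Set.InjOn f s)
    (k : ℝ × G → F) :
    ∫ q in (f '' s) ×ˢ t, k q ∂(volume.prod μ) =
      ∫ q in s ×ˢ t, |f' q.1| • k (f q.1, q.2) ∂(volume.prod μ) := by
  have hderiv : ∀ q ∈ s ×ˢ t, HasFDerivWithinAt (Prod.map f id)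
      ((ContinuousLinearMap.toSpanSingleton ℝ (f' q.1)).prodMap (.id ℝ G)) (s ×ˢ t) q :=
    fun q hq => (HasFDerivAt.prodMap q (hf q.1 hq.1).hasFDerivAt
      (hasFDerivAt_id q.2)).hasFDerivWithinAt
  have hdet (c : ℝ) :
      ((ContinuousLinearMap.toSpanSingleton ℝ c).prodMap (.id ℝ G)).det = c := by
    simp [ContinuousLinearMap.det, LinearMap.det_prodMap]
  have himage : (f '' s) ×ˢ t = Prod.map f id '' s ×ˢ t := by
    rw [Set.prodMap_image_prod, Set.image_id]
  rw [himage, integral_image_eq_integral_abs_det_fderiv_smul _ (hs.prod ht) hderiv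
    (hinj.prodMap (Set.injOn_id t))]
  simp only [hdet, Prod.map, id]

theorem strictMonoOn_mul_sin {R : ℝ} (hR : 0 < R) :
    StrictMonoOn (fun φ => R * sin φ) (Set.Icc 0 (π / 2)) :=
  fun _ hφ _ hψ h => mul_lt_mul_of_pos_left (strictMonoOn_sin
    ⟨by linarith [hφ.1, pi_pos], hφ.2⟩ ⟨by linarith [hψ.1, pi_pos], hψ.2⟩ h) hR

theorem image_mul_sin_Ioo {R : ℝ} (hR : 0 < R) :
    (fun φ => R * sin φ) '' Set.Ioo 0 (π / 2) = Set.Ioo 0 R := by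
  simpa using ContinuousOn.image_Ioo_of_strictMonoOn pi_div_two_pos.le
    (by fun_prop) (strictMonoOn_mul_sin hR)

theorem integral_euclideanPlane_eq_integral_prod (f : EuclideanSpace ℝ (Fin 2) → F) :
    ∫ y, f y = ∫ q : ℝ × ℝ, f !₂[q.1, q.2] := by
  rw [← (EuclideanSpace.volume_preserving_symm_measurableEquiv_toLp (Fin 2)).symm.integral_comp',
    ← (volume_preserving_finTwoArrow ℝ).symm.integral_comp']
  rfl

theorem norm_cos_sin (α : ℝ) : ‖!₂[cos α, sin α]‖ = 1 := by
  simp [EuclideanSpace.norm_eq]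

theorem setIntegral_ball_eq_polar (f : EuclideanSpace ℝ (Fin 2) → F)
    (x : EuclideanSpace ℝ (Fin 2)) (R : ℝ) :
    ∫ y in Metric.ball x R, f y =
      ∫ q in Set.Ioo 0 R ×ˢ Set.Ioo (-π) π, q.1 • f (x + q.1 • !₂[cos q.2, sin q.2]) := by
  have hpolar (q : ℝ × ℝ) : !₂[q.1 * cos q.2, q.1 * sin q.2] = q.1 • !₂[cos q.2, sin q.2] := by
    ext i; fin_cases i <;> rfl
  have hdisc : Set.Ioo 0 R ×ˢ Set.Ioo (-π) π = polarCoord.target ∩ (Set.Iio R ×ˢ Set.univ) := by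
    rw [polarCoord_target, Set.prod_inter_prod, Set.Ioi_inter_Iio, Set.inter_univ]
  rw [← integral_indicator Metric.isOpen_ball.measurableSet, ← integral_add_left_eq_self _ x,
    integral_euclideanPlane_eq_integral_prod, ← integral_comp_polarCoord_symm, hdisc,
    ← setIntegral_indicator (measurableSet_Iio.prod .univ)]
  refine setIntegral_congr_fun polarCoord.open_target.measurableSet fun q hq => ?_
  have hq₀ : 0 < q.1 := hq.1
  simp [Set.indicator, hpolar, norm_smul, norm_cos_sin, abs_of_pos hq₀]

theorem setIntegral_ball_inv_sqrt_smul {g : EuclideanSpace ℝ (Fin 2) → F} (hg : Continuous g)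
    (x : EuclideanSpace ℝ (Fin 2)) {R : ℝ} (hR : 0 < R) :
    ∫ y in Metric.ball x R, (√(R ^ 2 - dist x y ^ 2))⁻¹ • g y =
      ∫ φ in 0..π / 2, ∫ α in -π..π,
        (R * sin φ) • g (x + (R * sin φ) • !₂[cos α, sin α]) := by
  have hint : IntegrableOn (fun q : ℝ × ℝ =>
      (R * sin q.1) • g (x + (R * sin q.1) • !₂[cos q.2, sin q.2]))
      (Set.Ioo 0 (π / 2) ×ˢ Set.Ioo (-π) π) :=
    ((Continuous.continuousOn (by fun_prop)).integrableOn_compact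
      (isCompact_Icc.prod isCompact_Icc)).mono_set
        (Set.prod_mono Set.Ioo_subset_Icc_self Set.Ioo_subset_Icc_self)
  simp only [intervalIntegral.integral_of_le pi_div_two_pos.le,
    intervalIntegral.integral_of_le (neg_le_self pi_pos.le), integral_Ioc_eq_integral_Ioo]
  rw [setIntegral_ball_eq_polar, ← image_mul_sin_Ioo hR, Measure.volume_eq_prod,
    setIntegral_image_prod volume measurableSet_Ioo measurableSet_Ioo
      (fun φ _ => (hasDerivAt_sin φ).const_mul R)
      ((strictMonoOn_mul_sin hR).injOn.mono Set.Ioo_subset_Icc_self), ← setIntegral_prod _ hint]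
  refine setIntegral_congr_fun (measurableSet_Ioo.prod measurableSet_Ioo) fun ⟨φ, α⟩ hq => ?_
  have hcos : 0 < R * cos φ :=
    mul_pos hR (cos_pos_of_mem_Ioo ⟨by linarith [hq.1.1, pi_pos], hq.1.2⟩)
  have hsqrt : √(R ^ 2 - (R * sin φ) ^ 2) = R * cos φ := by
    rw [← sqrt_sq hcos.le, mul_pow, mul_pow, cos_sq']
    ring_nf
  simp only [dist_self_add_right, norm_smul, norm_cos_sin, norm_eq_abs, mul_one, sq_abs, hsqrt,
    abs_of_pos hcos]
  rw [smul_comm (R * cos φ), smul_inv_smul₀ hcos.ne']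

theorem setIntegral_ball_mul_inv_sqrt_smul {g : EuclideanSpace ℝ (Fin 2) → F} (hg : Continuous g)
    (x : EuclideanSpace ℝ (Fin 2)) {a s : ℝ} (ha : 0 < a) (hs : 0 < s) :
    ∫ y in Metric.ball x (a * s), (√(a ^ 2 * s ^ 2 - dist x y ^ 2))⁻¹ • g y =
      a • ∫ φ in 0..π / 2, ∫ α in -π..π,
        (s * sin φ) • g (x + (a * s * sin φ) • !₂[cos α, sin α]) := by
  rw [← mul_pow, setIntegral_ball_inv_sqrt_smul hg x (mul_pos ha hs)]
  simp only [mul_assoc, mul_smul a, intervalIntegral.integral_smul]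

end Disc

section WaveEquation

variable {E F : Type*} [NormedAddCommGroup E] [InnerProductSpace ℝ E] [FiniteDimensional ℝ E]
  [NormedAddCommGroup F] [NormedSpace ℝ F]

theorem contDiff_timeSlice {X T : Type*} [NormedAddCommGroup X] [NormedSpace ℝ X]
    [NormedAddCommGroup T] [NormedSpace ℝ T] {n : WithTop ℕ∞} {θ : X → T → F}
    (hθ : ContDiff ℝ n (Function.uncurry θ)) (t : T) : ContDiff ℝ n fun y => θ y t :=
  hθ.comp (contDiff_prodMk_left t)

theorem laplacian_eq_sum_iteratedDeriv_line {ι : Type*} [Fintype ι] (b : OrthonormalBasis ι ℝ E)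
    {f : E → F} (hf : ContDiff ℝ 2 f) (y : E) :
    Δ f y = ∑ i, iteratedDeriv 2 (fun u : ℝ => f (y + u • b i)) 0 := by
  simp [InnerProductSpace.laplacian_eq_iteratedFDeriv_orthonormalBasis f b,
    iteratedFDeriv_two_apply, iteratedDeriv_two_line hf]

theorem spatialLaplacian_eq_laplacian {f : EuclideanSpace ℝ (Fin 2) → ℝ} (hf : ContDiff ℝ 2 f) :
    spatialLaplacian f = Δ f := by
  ext y
  simp [spatialLaplacian, laplacian_eq_sum_iteratedDeriv_line (EuclideanSpace.basisFun _ ℝ) hf]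

/-- The d'Alembertian `∂ₜ² θ - a² Δ θ` with propagation speed `a`, at position `y` and time `t`. -/
noncomputable def dAlembertian (a : ℝ) (θ : E → ℝ → F) (y : E) (t : ℝ) : F :=
  iteratedDeriv 2 (θ y) t - a ^ 2 • Δ (fun z => θ z t) y

theorem dAlembertian_eq_waveOperator {θ : E → ℝ → F} (hθ : ContDiff ℝ 2 (Function.uncurry θ))
    (b : OrthonormalBasis (Fin 2) ℝ E) (a : ℝ) (y : E) (t : ℝ) :
    dAlembertian a θ y t =
      waveOperator (0, 1) (a • b 0, 0) (a • b 1, 0) (Function.uncurry θ) (y, t) := by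
  have htime := iteratedDeriv_two_line hθ (y, 0) (0, 1) t
  have hspace (i : Fin 2) := iteratedDeriv_two_line hθ (y, t) (b i, 0) 0
  have hscale (i : Fin 2) : ((a • b i, 0) : E × ℝ) = a • (b i, 0) := by simp
  simp only [Function.uncurry, Prod.smul_mk, Prod.mk_add_mk, smul_zero, smul_eq_mul, mul_one,
    add_zero, zero_add, mul_zero, zero_smul] at htime hspace
  rw [dAlembertian, waveOperator, laplacian_eq_sum_iteratedDeriv_line b (contDiff_timeSlice hθ t),
    Fin.sum_univ_two, htime, hspace, hspace, hscale, hscale]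
  simp only [map_smul, _root_.smul_apply, Function.uncurry_def]
  module

theorem eventually_forall_eq_zero_of_hasCompactSupport_uncurry {X Z : Type*}
    [TopologicalSpace X] [Zero Z] {θ : X → ℝ → Z} (hθ : HasCompactSupport (Function.uncurry θ)) :
    ∀ᶠ t in Filter.atTop, ∀ y, θ y t = 0 := by
  obtain ⟨T, hT⟩ := (hθ.isCompact.image continuous_snd).bddAbove
  filter_upwards [Filter.eventually_gt_atTop T] with t ht y
  by_contra hne
  exact ht.not_ge (hT ⟨(y, t), subset_tsupport _ hne, rfl⟩)

theorem uncurry_eventuallyEq_zero {X Z : Type*} [TopologicalSpace X] [Zero Z] {θ : X → ℝ → Z}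
    {T t : ℝ} (hT : ∀ t ≥ T, ∀ y, θ y t = 0) (ht : T < t) (y : X) :
    Function.uncurry θ =ᶠ[nhds (y, t)] 0 := by
  filter_upwards [continuous_snd.continuousAt.eventually (lt_mem_nhds ht)] with q hq
  exact hT q.2 hq.le q.1

theorem conePoint_lightCone (a : ℝ) (x : EuclideanSpace ℝ (Fin 2)) (τ s φ α : ℝ) :
    conePoint (x, τ) (0, 1) (a • EuclideanSpace.basisFun (Fin 2) ℝ 0, 0)
        (a • EuclideanSpace.basisFun (Fin 2) ℝ 1, 0) s φ α =
      (x + (a * s * sin φ) • !₂[cos α, sin α], τ + s) := by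
  ext i
  · fin_cases i <;> simp [conePoint, polarVector] <;> ring
  · simp [conePoint, polarVector]

variable {θ : EuclideanSpace ℝ (Fin 2) → ℝ → F} (hθ : ContDiff ℝ 2 (Function.uncurry θ))
include hθ

theorem continuous_dAlembertian (a t : ℝ) : Continuous fun y => dAlembertian a θ y t := by
  simp only [dAlembertian_eq_waveOperator hθ (EuclideanSpace.basisFun _ ℝ)]
  exact (continuous_waveOperator _ _ _ hθ).comp (by fun_prop)

theorem dAlembertian_eq_zero {T t : ℝ} (hT : ∀ t ≥ T, ∀ y, θ y t = 0) (ht : T < t) (a : ℝ)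
    (y : EuclideanSpace ℝ (Fin 2)) : dAlembertian a θ y t = 0 := by
  rw [dAlembertian_eq_waveOperator hθ (EuclideanSpace.basisFun _ ℝ),
    waveOperator_eq_zero_of_eventuallyEq (uncurry_eventuallyEq_zero hT ht y)]

theorem integral_dAlembertian_lightCone [CompleteSpace F] {T S τ : ℝ}
    (hT : ∀ t ≥ T, ∀ y, θ y t = 0) (hS : T < τ + S) (a : ℝ) (x : EuclideanSpace ℝ (Fin 2)) :
    ∫ s in 0..S, ∫ φ in 0..π / 2, ∫ α in -π..π, (s * sin φ) •
      dAlembertian a θ (x + (a * s * sin φ) • !₂[cos α, sin α]) (τ + s) = (2 * π) • θ x τ := by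
  simp only [dAlembertian_eq_waveOperator hθ (EuclideanSpace.basisFun _ ℝ), ← conePoint_lightCone]
  refine integral_waveOperator_conePoint _ _ _ _ hθ (fun φ α => ?_) fun φ α => ?_ <;>
    rw [conePoint_lightCone]
  · exact (uncurry_eventuallyEq_zero hT hS _).eq_of_nhds
  · simp [(uncurry_eventuallyEq_zero hT hS _).fderiv_eq]

theorem poisson_formula_test_function_general [CompleteSpace F]
    (hθ_late : ∀ᶠ t in Filter.atTop, ∀ y, θ y t = 0) {a : ℝ} (ha : 0 < a)
    (x : EuclideanSpace ℝ (Fin 2)) (τ : ℝ) :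
    (1 / (2 * π * a)) • ∫ t in Set.Ioi τ, ∫ y in Metric.ball x (a * (t - τ)),
      (√(a ^ 2 * (t - τ) ^ 2 - dist x y ^ 2))⁻¹ • dAlembertian a θ y t = θ x τ := by
  obtain ⟨T, hT⟩ := Filter.eventually_atTop.1 hθ_late
  obtain ⟨S, hS, hTS⟩ : ∃ S, 0 ≤ S ∧ T < τ + S :=
    ⟨max 0 (T - τ + 1), le_max_left _ _, by linarith [le_max_right 0 (T - τ + 1)]⟩
  have hlate (t : ℝ) (ht : τ + S < t) : ∫ y in Metric.ball x (a * (t - τ)),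
      (√(a ^ 2 * (t - τ) ^ 2 - dist x y ^ 2))⁻¹ • dAlembertian a θ y t = 0 := by
    simp [dAlembertian_eq_zero hθ hT (hTS.trans ht)]
  have hscalar : 1 / (2 * π * a) * a * (2 * π) = 1 := by field_simp
  rw [setIntegral_Ioi_eq_intervalIntegral hS hlate]
  simp only [add_sub_cancel_left]
  rw [intervalIntegral.integral_congr_Ioo_of_le hS fun s hs =>
      setIntegral_ball_mul_inv_sqrt_smul (continuous_dAlembertian hθ a _) x ha hs.1,
    intervalIntegral.integral_smul, integral_dAlembertian_lightCone hθ hT hTS, smul_smul,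
    smul_smul, hscalar, one_smul]

end WaveEquation

/-- Poisson's formula identity for the planar wave equation applied to test functions:
for smooth compactly supported `θ` and `ψ = ∂²θ/∂t² - a² Δθ`,
`(1/(2πa)) ∫_τ^∞ ∬_{|y-x| < a(t-τ)} ψ(y,t)/√(a²(t-τ)² - |x-y|²) dy dt = θ(x,τ)`. -/
theorem poisson_formula_test_function
    (a : ℝ) (ha : 0 < a) (θ : EuclideanSpace ℝ (Fin 2) → ℝ → ℝ)
    (hθ_smooth : ContDiff ℝ (⊤ : ℕ∞) (Function.uncurry θ))
    (hθ_supp : HasCompactSupport (Function.uncurry θ))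
    (ψ : EuclideanSpace ℝ (Fin 2) → ℝ → ℝ)
    (hψ : ∀ (y : EuclideanSpace ℝ (Fin 2)) (t : ℝ),
      ψ y t = iteratedDeriv 2 (θ y) t - a ^ 2 * spatialLaplacian (fun z => θ z t) y)
    (x : EuclideanSpace ℝ (Fin 2)) (τ : ℝ) :
    (1 / (2 * Real.pi * a)) *
      ∫ t in Set.Ioi τ,
        ∫ y in Metric.ball x (a * (t - τ)),
          ψ y t / Real.sqrt (a ^ 2 * (t - τ) ^ 2 - (dist x y) ^ 2)
      = θ x τ := by
  have hθ : ContDiff ℝ 2 (Function.uncurry θ) := contDiff_infty.1 hθ_smooth 2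
  have hψ' (y t) : ψ y t = dAlembertian a θ y t := by
    rw [hψ, spatialLaplacian_eq_laplacian (contDiff_timeSlice hθ t), dAlembertian, smul_eq_mul]
  simpa only [hψ', div_eq_inv_mul, smul_eq_mul, mul_one] using
    poisson_formula_test_function_general hθ
      (eventually_forall_eq_zero_of_hasCompactSupport_uncurry hθ_supp) ha x τ
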